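/- Let a, s ≥ 0 be integers, let h^1, …, h^n ∈ Mat(N, ℂ) satisfy the Clifford relations for signature (p, q), let U ∈ Mat(N, ℂ), fix ν ∈ {1,…,n} with h_ν = η_{νν} h^ν, and let ε ∈ {+1, −1}. Writing M^{b,m}_{+1} = F^m(F^b(U)·h_ν) and M^{b,m}_{−1} = F^m(h_ν·F^b(U)), one has M^{a,s}_{ε} = Σ_{i=0}^{a} (−1)^i 2^{a−i} binom(a, i) M^{0, i+s}_{ε·(−1)^{a−i}}. -/

import Mathlib

open Matrix

/-- The diagonal metric entries η^{μμ} of signature (p,q). -/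
def etaC (p q : ℕ) (μ : Fin (p + q)) : ℂ := if (μ : ℕ) < p then 1 else -1

/-- The Clifford relations h^μ h^ν + h^ν h^μ = 2 η^{μν} I for signature (p,q). -/
def CliffRel (p q N : ℕ) (h : Fin (p + q) → Matrix (Fin N) (Fin N) ℂ) : Prop :=
  ∀ μ ν : Fin (p + q), h μ * h ν + h ν * h μ =
    (2 * if μ = ν then etaC p q μ else 0) • (1 : Matrix (Fin N) (Fin N) ℂ)

/-- The generator contraction F(U) = Σ_a η^{aa} h^a U h^a. -/
noncomputable def gencon (p q N : ℕ) (h : Fin (p + q) → Matrix (Fin N) (Fin N) ℂ)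
    (U : Matrix (Fin N) (Fin N) ℂ) : Matrix (Fin N) (Fin N) ℂ :=
  ∑ a : Fin (p + q), etaC p q a • (h a * U * h a)

/-- The contraction M^{b,m}_ε(U, h_ν): M^{b,m}_{+1} = F^m(F^b(U)·h_ν) and
M^{b,m}_{−1} = F^m(h_ν·F^b(U)), where h_ν = η_{νν} h^ν and ε ∈ {+1,−1} ⊆ ℤ. -/
noncomputable def Mcon (p q N : ℕ) (h : Fin (p + q) → Matrix (Fin N) (Fin N) ℂ)
    (U : Matrix (Fin N) (Fin N) ℂ) (ν : Fin (p + q)) (b m : ℕ) (ε : ℤ) :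
    Matrix (Fin N) (Fin N) ℂ :=
  if ε = 1 then (gencon p q N h)^[m] ((gencon p q N h)^[b] U * (etaC p q ν • h ν))
  else (gencon p q N h)^[m] ((etaC p q ν • h ν) * (gencon p q N h)^[b] U)

theorem etaC_sq (p q : ℕ) (μ : Fin (p + q)) : etaC p q μ * etaC p q μ = 1 := by
  unfold etaC; split_ifs <;> norm_num

theorem gencon_lin (p q N : ℕ) (h : Fin (p + q) → Matrix (Fin N) (Fin N) ℂ)
    (X Y : Matrix (Fin N) (Fin N) ℂ) :
    gencon p q N h ((2 : ℂ) • X - Y) = (2 : ℂ) • gencon p q N h X - gencon p q N h Y := by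
  unfold gencon
  rw [Finset.smul_sum, ← Finset.sum_sub_distrib]
  refine Finset.sum_congr rfl fun a _ => ?_
  rw [mul_sub, sub_mul, smul_sub, Matrix.mul_smul, Matrix.smul_mul, smul_comm]

theorem gencon_iter_lin (p q N : ℕ) (h : Fin (p + q) → Matrix (Fin N) (Fin N) ℂ) (m : ℕ)
    (X Y : Matrix (Fin N) (Fin N) ℂ) :
    (gencon p q N h)^[m] ((2 : ℂ) • X - Y) =
      (2 : ℂ) • (gencon p q N h)^[m] X - (gencon p q N h)^[m] Y := by
  induction m generalizing X Y with
  | zero => rfl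
  | succ m ih => simp only [Function.iterate_succ, Function.comp, gencon_lin, ih]

theorem gencon_right (p q N : ℕ) (h : Fin (p + q) → Matrix (Fin N) (Fin N) ℂ)
    (hcl : CliffRel p q N h) (X : Matrix (Fin N) (Fin N) ℂ) (ν : Fin (p + q)) :
    gencon p q N h X * (etaC p q ν • h ν) =
      (2 : ℂ) • ((etaC p q ν • h ν) * X) - gencon p q N h (X * (etaC p q ν • h ν)) := by
  rw [eq_sub_iff_add_eq]
  unfold gencon
  rw [Finset.sum_mul, ← Finset.sum_add_distrib]
  have key : ∀ a, (etaC p q a • (h a * X * h a)) * (etaC p q ν • h ν) +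
      etaC p q a • (h a * (X * (etaC p q ν • h ν)) * h a) =
      if a = ν then (2 : ℂ) • ((etaC p q ν • h ν) * X) else 0 := by
    intro a
    have e : (etaC p q a • (h a * X * h a)) * (etaC p q ν • h ν) +
      etaC p q a • (h a * (X * (etaC p q ν • h ν)) * h a) =
      (etaC p q a * etaC p q ν) • (h a * X * (h a * h ν + h ν * h a)) := by
      simp only [Matrix.mul_smul, Matrix.smul_mul, smul_smul, mul_add, smul_add, mul_assoc,
        mul_comm (etaC p q ν)]
    rw [e, hcl]
    split_ifs with hh
    · subst hh
      simp only [Matrix.mul_smul, Matrix.smul_mul, smul_smul, mul_one, etaC_sq, one_mul]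
    · simp
  rw [Finset.sum_congr rfl fun a _ => key a]
  simp

theorem gencon_left (p q N : ℕ) (h : Fin (p + q) → Matrix (Fin N) (Fin N) ℂ)
    (hcl : CliffRel p q N h) (X : Matrix (Fin N) (Fin N) ℂ) (ν : Fin (p + q)) :
    (etaC p q ν • h ν) * gencon p q N h X =
      (2 : ℂ) • (X * (etaC p q ν • h ν)) - gencon p q N h ((etaC p q ν • h ν) * X) := by
  rw [eq_sub_iff_add_eq]
  unfold gencon
  rw [Finset.mul_sum, ← Finset.sum_add_distrib]
  have key : ∀ a, (etaC p q ν • h ν) * (etaC p q a • (h a * X * h a)) +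
      etaC p q a • (h a * ((etaC p q ν • h ν) * X) * h a) =
      if a = ν then (2 : ℂ) • (X * (etaC p q ν • h ν)) else 0 := by
    intro a
    have e : (etaC p q ν • h ν) * (etaC p q a • (h a * X * h a)) +
      etaC p q a • (h a * ((etaC p q ν • h ν) * X) * h a) =
      (etaC p q a * etaC p q ν) • ((h a * h ν + h ν * h a) * (X * h a)) := by
      simp only [Matrix.mul_smul, Matrix.smul_mul, smul_smul, add_mul, smul_add, mul_assoc,
        mul_comm (etaC p q ν)]
      rw [add_comm]
    rw [e, hcl]
    split_ifs with hh
    · subst hh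
      simp only [Matrix.mul_smul, Matrix.smul_mul, smul_smul, one_mul, etaC_sq]
    · simp
  rw [Finset.sum_congr rfl fun a _ => key a]
  simp

theorem Mcon_rec (p q N : ℕ) (h : Fin (p + q) → Matrix (Fin N) (Fin N) ℂ)
    (hcl : CliffRel p q N h) (U : Matrix (Fin N) (Fin N) ℂ) (ν : Fin (p + q))
    (a s : ℕ) (ε : ℤ) (hε : ε = 1 ∨ ε = -1) :
    Mcon p q N h U ν (a + 1) s ε =
      (2 : ℂ) • Mcon p q N h U ν a s (-ε) - Mcon p q N h U ν a (s + 1) ε := by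
  have n1 : ¬ ((-1 : ℤ) = 1) := by decide
  rcases hε with rfl | rfl
  · simp only [Mcon, if_true, if_neg n1]
    rw [Function.iterate_succ_apply' _ a, gencon_right _ _ _ _ hcl, gencon_iter_lin,
      Function.iterate_succ_apply _ s]
  · simp only [Mcon, neg_neg, if_true, if_neg n1]
    rw [Function.iterate_succ_apply' _ a, gencon_left _ _ _ _ hcl, gencon_iter_lin,
      Function.iterate_succ_apply _ s]

/-- M^{a,s}_ε = Σ_{i=0}^{a} (−1)^i 2^{a−i} binom(a,i) M^{0,i+s}_{ε·(−1)^{a−i}}. -/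
theorem contraction_expansion
    (p q N : ℕ) (hN : 1 ≤ N)
    (h : Fin (p + q) → Matrix (Fin N) (Fin N) ℂ)
    (hcl : CliffRel p q N h)
    (U : Matrix (Fin N) (Fin N) ℂ) (ν : Fin (p + q))
    (a s : ℕ) (ε : ℤ) (hε : ε = 1 ∨ ε = -1) :
    Mcon p q N h U ν a s ε =
      ∑ i ∈ Finset.range (a + 1),
        ((-1 : ℂ) ^ i * 2 ^ (a - i) * (a.choose i)) •
          Mcon p q N h U ν 0 (i + s) (ε * (-1) ^ (a - i)) := by
  induction a generalizing s ε with
  | zero => simp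
  | succ a ih =>
    rw [Mcon_rec _ _ _ _ hcl _ _ _ _ _ hε, ih s (-ε) (by omega), ih (s + 1) ε hε,
      Finset.sum_range_succ' _ (a + 1)]
    have e1 : ∀ i ∈ Finset.range (a + 1),
        ((-1 : ℂ) ^ (i + 1) * 2 ^ (a + 1 - (i + 1)) * ((a + 1).choose (i + 1) : ℕ)) •
          Mcon p q N h U ν 0 (i + 1 + s) (ε * (-1) ^ (a + 1 - (i + 1))) =
        ((-1 : ℂ) ^ (i + 1) * 2 ^ (a + 1 - (i + 1)) * (a.choose (i + 1) : ℕ)) •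
          Mcon p q N h U ν 0 (i + 1 + s) (ε * (-1) ^ (a + 1 - (i + 1))) -
        ((-1 : ℂ) ^ i * 2 ^ (a - i) * (a.choose i)) •
          Mcon p q N h U ν 0 (i + (s + 1)) (ε * (-1) ^ (a - i)) := by
      intro i _
      rw [Nat.add_sub_add_right, show i + (s + 1) = i + 1 + s by ring, ← sub_smul,
        Nat.choose_succ_succ]
      congr 1
      push_cast
      ring
    rw [Finset.sum_congr rfl e1, Finset.sum_sub_distrib, sub_add_eq_add_sub]
    congr 1
    have e2 := Finset.sum_range_succ' (fun i => ((-1 : ℂ) ^ i * 2 ^ (a + 1 - i) * (a.choose i : ℕ)) •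
          Mcon p q N h U ν 0 (i + s) (ε * (-1) ^ (a + 1 - i))) (a + 1)
    simp only [Nat.choose_zero_right] at e2 ⊢
    rw [← e2, Finset.sum_range_succ _ (a + 1), Nat.choose_succ_self, Finset.smul_sum]
    simp only [Nat.cast_zero, mul_zero, zero_smul, add_zero]
    refine Finset.sum_congr rfl fun i hi => ?_
    have hi' : a + 1 - i = (a - i) + 1 := by
      have := Finset.mem_range.1 hi
      omega
    rw [hi', smul_smul, pow_succ (-1 : ℤ), pow_succ (2 : ℂ)]
    congr 1
    · ring
    · congr 1
      ring
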